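/- (Local discounted turnpike property assuming invariance.) Let β ∈ (0,1), let ℓ be bounded on Y, assume the system is locally discounted strictly dissipative at (x_l^β,u_l^β) on X_N with bounded storage λ and α_β ∈ K∞, and let X_inv ⊆ X_N be such that for each x ∈ X_inv there is an admissible control attaining Ṽ_∞(x) whose trajectory remains in X_inv for all k ≥ 0. Assume further that Ṽ_∞(x) ≤ α_V(‖x − x_l^β‖) for all x ∈ X_inv with some α_V ∈ K∞, and Ṽ_∞(x) ≤ C · inf{ℓ̃(x,u) : (x,u) ∈ Y} for all x ∈ X_inv with C ≥ 1 and C < 1/(1−β). Then: for each ε > 0 and each bounded set 𝕏_b ⊆ X_inv there exists P ∈ ℕ such that for each M ∈ ℕ there exists δ > 0 such that for all x₀ ∈ 𝕏_b and all admissible u with J_∞(x₀,u) ≤ V_∞(x₀) + δ and x_u(k,x₀) ∈ X_inv for all k ∈ {0,…,M}, the set {k ∈ {0,…,M} : ‖x_u(k,x₀) − x_l^β‖ ≥ ε} has at most P elements. -/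

import Mathlib

/-!
The storage function `λ` is bounded, so telescoping shows that the rotated cost `J̃(x, u)` and the
original cost `J(x, u)` differ, for admissible `u`, by a quantity depending only on `x`
(`Jinf_rot`). Hence a `δ`-optimal control for `ℓ` is `δ`-optimal for the rotated cost `ℓ̃`.

By dynamic programming the `k`-th tail of a `δ`-optimal control is `δ / β ^ k`-optimal from `x(k)`
(`NearOpt.tail`), so that `ℓ̃(x(k), u(k)) + β Ṽ(x(k+1)) ≤ Ṽ(x(k)) + δ / β ^ k`. Together with
`Ṽ ≤ C inf ℓ̃` this gives `Ṽ(x(k+1)) ≤ κ Ṽ(x(k)) + δ / β ^ (k+1)` with `κ = (1 - 1/C) / β`, and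
`κ < 1` is exactly the condition `C < 1 / (1 - β)`. For `δ` small in terms of `M`, the value
`Ṽ(x(k))` is therefore below the threshold `αβ(ε)` for every `k ∈ [P, M]`, where `P` depends only
on `κ`, `αβ(ε)` and the bound of `Ṽ` on the bounded set of initial values. Since
`Ṽ(x) ≥ αβ(‖x - xl‖)` on `X_inv`, at most the first `P` states can be `ε`-far from `xl`.
-/

open scoped BigOperators

variable {X U : Type*} [NormedAddCommGroup X] [NormedAddCommGroup U]

/-- Trajectory of the controlled system `x(k+1) = f(x(k), u(k))`, `x(0) = x₀`. -/
def traj (f : X → U → X) (x₀ : X) (u : ℕ → U) : ℕ → X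
  | 0 => x₀
  | k + 1 => f (traj f x₀ u k) (u k)

/-- A control sequence is admissible for `x₀` if the state-control pairs stay in `Y`. -/
def Admissible (f : X → U → X) (Y : Set (X × U)) (x₀ : X) (u : ℕ → U) : Prop :=
  ∀ k : ℕ, (traj f x₀ u k, u k) ∈ Y

/-- The state constraint set `𝕏 = {x | ∃ u, (x,u) ∈ Y}`. -/
def stateSet (Y : Set (X × U)) : Set X := {x : X | ∃ u : U, (x, u) ∈ Y}

/-- Discounted infinite-horizon cost functional. -/
noncomputable def Jinf (β : ℝ) (g : X → U → ℝ) (f : X → U → X) (x₀ : X) (u : ℕ → U) : ℝ :=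
  ∑' k : ℕ, β ^ k * g (traj f x₀ u k) (u k)

/-- Optimal value function of the discounted problem. -/
noncomputable def Vinf (β : ℝ) (g : X → U → ℝ) (f : X → U → X) (Y : Set (X × U)) (x₀ : X) : ℝ :=
  sInf {r : ℝ | ∃ u : ℕ → U, Admissible f Y x₀ u ∧ Jinf β g f x₀ u = r}

/-- Rotated stage cost `ℓ̃(x,u) = ℓ(x,u) − ℓ(xe,ue) + λ(x) − βλ(f(x,u))`. -/
def rot (β : ℝ) (g : X → U → ℝ) (f : X → U → X) (lam : X → ℝ) (xe : X) (ue : U)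
    (x : X) (u : U) : ℝ :=
  g x u - g xe ue + lam x - β * lam (f x u)

/-- Class `K∞` comparison functions. -/
structure KInfty (α : ℝ → ℝ) : Prop where
  cont : ContinuousOn α (Set.Ici 0)
  mono : StrictMonoOn α (Set.Ici 0)
  zero : α 0 = 0
  unbounded : ∀ c : ℝ, ∃ r : ℝ, 0 ≤ r ∧ c < α r

lemma traj_add (f : X → U → X) (x : X) (u : ℕ → U) (k j : ℕ) :
    traj f x u (k + j) = traj f (traj f x u k) (fun i => u (k + i)) j := by
  induction j with
  | zero => rfl
  | succ j ih =>
    show f (traj f x u (k + j)) (u (k + j)) = _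
    rw [ih]; rfl

lemma traj_succ' (f : X → U → X) (x : X) (u : ℕ → U) (j : ℕ) :
    traj f x u (j + 1) = traj f (f x (u 0)) (fun i => u (i + 1)) j := by
  have h := traj_add f x u 1 j
  simp only [add_comm 1] at h
  exact h

lemma Admissible.tail {f : X → U → X} {Y : Set (X × U)} {x : X} {u : ℕ → U}
    (h : Admissible f Y x u) (k : ℕ) :
    Admissible f Y (traj f x u k) (fun i => u (k + i)) := by
  intro j
  rw [← traj_add]
  exact h (k + j)

/-- Prepending a feasible control value to an admissible control. -/
lemma Admissible.cons {f : X → U → X} {Y : Set (X × U)} {x : X} {v : U} {w : ℕ → U}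
    (hv : (x, v) ∈ Y) (h : Admissible f Y (f x v) w) :
    Admissible f Y x (fun i => Nat.casesOn i v w) := by
  intro j
  cases j with
  | zero => exact hv
  | succ j => rw [traj_succ']; exact h j

lemma summable_discounted {β : ℝ} (hβ : β ∈ Set.Ioo (0 : ℝ) 1) {a : ℕ → ℝ} {B : ℝ}
    (ha : ∀ k, |a k| ≤ B) : Summable fun k => β ^ k * a k := by
  refine Summable.of_norm_bounded
    ((summable_geometric_of_lt_one hβ.1.le hβ.2).mul_right B) fun k => ?_
  rw [Real.norm_eq_abs, abs_mul, abs_of_pos (pow_pos hβ.1 k)]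
  exact mul_le_mul_of_nonneg_left (ha k) (pow_pos hβ.1 k).le

/-- One step of dynamic programming along an admissible control. -/
lemma Jinf_step {β : ℝ} (hβ : β ∈ Set.Ioo (0 : ℝ) 1) {g : X → U → ℝ} {f : X → U → X}
    {Y : Set (X × U)} {B : ℝ} (hg : ∀ p ∈ Y, |g p.1 p.2| ≤ B) {x : X} {u : ℕ → U}
    (hu : Admissible f Y x u) :
    Jinf β g f x u = g x (u 0) + β * Jinf β g f (f x (u 0)) (fun i => u (i + 1)) := by
  have hs := summable_discounted hβ (fun k => hg _ (hu k))
  unfold Jinf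
  rw [hs.tsum_eq_zero_add, ← tsum_mul_left]
  congr 1
  · simp [traj]
  · refine tsum_congr fun k => ?_
    rw [traj_succ']; ring

/-- For a bounded storage function, the rotated cost and the original cost of an admissible
control differ by a quantity that depends on the initial value only. -/
lemma Jinf_rot {β : ℝ} (hβ : β ∈ Set.Ioo (0 : ℝ) 1) {g : X → U → ℝ} {f : X → U → X}
    {Y : Set (X × U)} {B : ℝ} (hg : ∀ p ∈ Y, |g p.1 p.2| ≤ B) {lam : X → ℝ} {L : ℝ}
    (hlam : ∀ x, |lam x| ≤ L) (xe : X) (ue : U) {x : X} {u : ℕ → U}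
    (hu : Admissible f Y x u) :
    Jinf β (rot β g f lam xe ue) f x u =
      Jinf β g f x u - (∑' k : ℕ, β ^ k * g xe ue) + lam x := by
  have h1 := summable_discounted hβ (fun k => hg _ (hu k))
  have h2 : Summable fun k : ℕ => β ^ k * g xe ue := summable_discounted hβ (fun _ => le_rfl)
  have h3 := summable_discounted hβ (fun k => hlam (traj f x u k))
  have h4 := (summable_nat_add_iff 1).2 h3
  have h5 := h3.tsum_eq_zero_add
  have h6 : Jinf β (rot β g f lam xe ue) f x u =
      ∑' k : ℕ, ((β ^ k * g (traj f x u k) (u k) - β ^ k * g xe ue) +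
        (β ^ k * lam (traj f x u k) - β ^ (k + 1) * lam (traj f x u (k + 1)))) := by
    refine tsum_congr fun k => ?_
    simp only [rot, traj]; ring
  rw [h6, (h1.sub h2).tsum_add (h3.sub h4), h1.tsum_sub h2, h3.tsum_sub h4, h5]
  simp only [Jinf, traj]; ring

/-- `u` is `δ`-optimal for the initial value `x`, phrased without the infimum. -/
def NearOpt (β : ℝ) (g : X → U → ℝ) (f : X → U → X) (Y : Set (X × U)) (x : X) (u : ℕ → U)
    (δ : ℝ) : Prop :=
  ∀ w, Admissible f Y x w → Jinf β g f x u ≤ Jinf β g f x w + δ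

/-- Tails of near-optimal controls are near-optimal, with the error inflated by `β⁻ᵏ`. -/
lemma NearOpt.tail {β : ℝ} (hβ : β ∈ Set.Ioo (0 : ℝ) 1) {g : X → U → ℝ} {f : X → U → X}
    {Y : Set (X × U)} {B : ℝ} (hg : ∀ p ∈ Y, |g p.1 p.2| ≤ B) {x : X} {u : ℕ → U} {δ : ℝ}
    (hu : Admissible f Y x u) (h : NearOpt β g f Y x u δ) (k : ℕ) :
    NearOpt β g f Y (traj f x u k) (fun i => u (k + i)) (δ / β ^ k) := by
  induction k with
  | zero => simpa [traj] using h
  | succ k ih =>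
    intro w hw
    have hc := Admissible.cons (hu k) hw
    have h1 := ih _ hc
    rw [Jinf_step hβ hg (hu.tail k), Jinf_step hβ hg hc] at h1
    have e : (fun i => u (k + (i + 1))) = fun i => u (k + 1 + i) := by
      funext i; congr 1; ring
    simp only [add_zero, e] at h1
    have hβ0 := hβ.1
    have h2 : β * Jinf β g f (traj f x u (k + 1)) (fun i => u (k + 1 + i)) ≤
        β * (Jinf β g f (traj f x u (k + 1)) w + δ / β ^ (k + 1)) := by
      have e2 : β * (δ / β ^ (k + 1)) = δ / β ^ k := by
        field_simp
        ring
      rw [mul_add, e2]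
      have h1' : g (traj f x u k) (u k) +
          β * Jinf β g f (traj f x u (k + 1)) (fun i => u (k + 1 + i)) ≤
          g (traj f x u k) (u k) + β * Jinf β g f (traj f x u (k + 1)) w + δ / β ^ k := h1
      linarith
    exact le_of_mul_le_mul_left h2 hβ0

/-- The costs of admissible controls are bounded below, so `Vinf` is a genuine infimum. -/
lemma Vinf_le {β : ℝ} (hβ : β ∈ Set.Ioo (0 : ℝ) 1) {g : X → U → ℝ} {f : X → U → X}
    {Y : Set (X × U)} {B : ℝ} (hg : ∀ p ∈ Y, |g p.1 p.2| ≤ B) {x : X} {u : ℕ → U}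
    (hu : Admissible f Y x u) : Vinf β g f Y x ≤ Jinf β g f x u := by
  refine csInf_le ⟨∑' k : ℕ, β ^ k * (-B), ?_⟩ ⟨u, hu, rfl⟩
  rintro _ ⟨w, hw, rfl⟩
  refine Summable.tsum_le_tsum (fun k => ?_)
    (summable_discounted hβ (fun _ => le_rfl)) (summable_discounted hβ (fun k => hg _ (hw k)))
  exact mul_le_mul_of_nonneg_left (abs_le.1 (hg _ (hw k))).1 (pow_pos hβ.1 k).le

/-- the local discounted turnpike property on an invariant set
`X_inv ⊆ X_N`, assuming local discounted strict dissipativity and the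
value function bounds on `X_inv`. -/
theorem local_turnpike_assuming_invariance
    (f : X → U → X) (Y : Set (X × U)) (ℓ : X → U → ℝ) (lam : X → ℝ)
    (β : ℝ) (hβ : β ∈ Set.Ioo (0 : ℝ) 1)
    (hℓ : ∃ B : ℝ, ∀ p ∈ Y, |ℓ p.1 p.2| ≤ B)
    (hadm : ∀ x₀ ∈ stateSet Y, ∃ u : ℕ → U, Admissible f Y x₀ u)
    (xl : X) (ul : U) (X_N : Set X)
    (heq : (xl, ul) ∈ Y) (hfix : f xl ul = xl)
    (hXN : X_N ⊆ stateSet Y) (hXNnhds : X_N ∈ nhds xl)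
    (hlam_bdd : ∃ B : ℝ, ∀ x : X, |lam x| ≤ B) (hlam0 : lam xl = 0)
    (αβ : ℝ → ℝ) (hαβ : KInfty αβ)
    (hdiss : ∀ x ∈ X_N, ∀ v : U,
      αβ ‖x - xl‖ ≤ ℓ x v - ℓ xl ul + lam x - β * lam (f x v))
    (X_inv : Set X) (hinv_sub : X_inv ⊆ X_N)
    (hinv : ∀ x ∈ X_inv, ∃ u : ℕ → U, Admissible f Y x u ∧
      Jinf β (rot β ℓ f lam xl ul) f x u = Vinf β (rot β ℓ f lam xl ul) f Y x ∧
      ∀ k : ℕ, traj f x u k ∈ X_inv)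
    (α_V : ℝ → ℝ) (hαV : KInfty α_V)
    (hVup : ∀ x ∈ X_inv, Vinf β (rot β ℓ f lam xl ul) f Y x ≤ α_V ‖x - xl‖)
    (C : ℝ) (hC1 : 1 ≤ C) (hC2 : C < 1 / (1 - β))
    (hVC : ∀ x ∈ X_inv,
      Vinf β (rot β ℓ f lam xl ul) f Y x ≤
        C * sInf {r : ℝ | ∃ v : U, (x, v) ∈ Y ∧ rot β ℓ f lam xl ul x v = r}) :
    ∀ ε > (0 : ℝ), ∀ Xb : Set X, Xb ⊆ X_inv → Bornology.IsBounded Xb →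
      ∃ P : ℕ, ∀ M : ℕ, ∃ δ > (0 : ℝ), ∀ x₀ ∈ Xb, ∀ u : ℕ → U, Admissible f Y x₀ u →
        Jinf β ℓ f x₀ u ≤ Vinf β ℓ f Y x₀ + δ →
        (∀ k ≤ M, traj f x₀ u k ∈ X_inv) →
        Set.ncard {k : ℕ | k ≤ M ∧ ε ≤ ‖traj f x₀ u k - xl‖} ≤ P := by
  intro ε hε Xb hXb hbdd
  obtain ⟨B, hB⟩ := hℓ
  obtain ⟨L, hL⟩ := hlam_bdd
  have hβ0 := hβ.1
  have hβ1 := hβ.2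
  set g := rot β ℓ f lam xl ul with hg_def
  obtain ⟨B', hB'⟩ : ∃ B' : ℝ, ∀ p ∈ Y, |g p.1 p.2| ≤ B' := by
    refine ⟨B + B + L + L, fun p hp => ?_⟩
    have h1 := abs_le.1 (hB p hp)
    have h2 := abs_le.1 (hB _ heq)
    have h3 := abs_le.1 (hL p.1)
    have h4 : |β * lam (f p.1 p.2)| ≤ L := by
      rw [abs_mul, abs_of_pos hβ0]
      exact (mul_le_of_le_one_left (abs_nonneg _) hβ1.le).trans (hL _)
    have h5 := abs_le.1 h4
    simp only [hg_def, rot]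
    rw [abs_le]
    constructor <;> linarith [h1.1, h1.2, h2.1, h2.2, h3.1, h3.2, h5.1, h5.2]
  have hαnn : ∀ r : ℝ, 0 ≤ r → 0 ≤ αβ r := fun r hr => by
    rw [← hαβ.zero]
    exact hαβ.mono.monotoneOn (Set.mem_Ici.2 le_rfl) hr hr
  have hglow : ∀ x ∈ X_inv, ∀ v, αβ ‖x - xl‖ ≤ g x v :=
    fun x hx v => hdiss x (hinv_sub hx) v
  have hgnn : ∀ x ∈ X_inv, ∀ v, 0 ≤ g x v :=
    fun x hx v => (hαnn _ (norm_nonneg _)).trans (hglow x hx v)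
  have hVlow : ∀ x ∈ X_inv, αβ ‖x - xl‖ ≤ Vinf β g f Y x := by
    intro x hx
    obtain ⟨w, hw, hJ, hstay⟩ := hinv x hx
    rw [← hJ, Jinf_step hβ hB' hw]
    have h0 : 0 ≤ Jinf β g f (f x (w 0)) (fun i => w (i + 1)) := by
      refine tsum_nonneg fun k => mul_nonneg (pow_pos hβ0 k).le ?_
      rw [← traj_succ']
      exact hgnn _ (hstay _) _
    linarith [hglow x hx (w 0), mul_nonneg hβ0.le h0]
  have hVC' : ∀ x ∈ X_inv, ∀ v, (x, v) ∈ Y → Vinf β g f Y x ≤ C * g x v := by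
    intro x hx v hv
    refine (hVC x hx).trans (mul_le_mul_of_nonneg_left ?_ (by linarith))
    refine csInf_le ⟨0, ?_⟩ ⟨v, hv, rfl⟩
    rintro _ ⟨v', -, rfl⟩
    exact hgnn x hx v'
  have hC0 : 0 < C := by linarith
  set κ := (1 - 1 / C) / β with hκ_def
  have hκ0 : 0 ≤ κ := by
    refine div_nonneg ?_ hβ0.le
    have := (div_le_one hC0).2 hC1
    linarith
  have hκ1 : κ < 1 := by
    rw [hκ_def, div_lt_one hβ0]
    have h1 : C * (1 - β) < 1 := (lt_div_iff₀ (by linarith)).1 hC2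
    have h2 : 1 - β < 1 / C := by rw [lt_div_iff₀ hC0]; linarith
    linarith
  obtain ⟨K, hK0, hK⟩ : ∃ K : ℝ, 0 ≤ K ∧ ∀ x ∈ Xb, Vinf β g f Y x ≤ K := by
    obtain ⟨R, hR⟩ := hbdd.exists_norm_le
    have hS : 0 ≤ |R| + ‖xl‖ := by positivity
    refine ⟨α_V (|R| + ‖xl‖), ?_, fun x hx => (hVup x (hXb hx)).trans ?_⟩
    · rw [← hαV.zero]
      exact hαV.mono.monotoneOn (Set.mem_Ici.2 le_rfl) hS hS
    · refine hαV.mono.monotoneOn (Set.mem_Ici.2 (norm_nonneg _)) hS ?_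
      linarith [norm_sub_le x xl, hR x hx, le_abs_self R]
  have hη : 0 < αβ ε := by
    rw [← hαβ.zero]
    exact hαβ.mono (Set.mem_Ici.2 le_rfl) (Set.mem_Ici.2 hε.le) hε
  set η := αβ ε
  obtain ⟨P, hP⟩ : ∃ P : ℕ, κ ^ P * K < η / 2 := by
    have ht : Filter.Tendsto (fun n : ℕ => κ ^ n * K) Filter.atTop (nhds (0 * K)) :=
      (tendsto_pow_atTop_nhds_zero_of_lt_one hκ0 hκ1).mul_const K
    rw [zero_mul] at ht
    exact (ht.eventually_lt_const (half_pos hη)).exists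
  refine ⟨P, fun M => ?_⟩
  -- With `δ = β ^ M * D` each error `δ / β ^ j`, `1 ≤ j ≤ M`, is at most `D`, so that the errors
  -- accumulated up to time `M` stay below `η / 2`.
  set D := η / (2 * (M + 1)) with hD_def
  have hD : 0 < D := by positivity
  refine ⟨β ^ M * D, by positivity, fun x₀ hx₀ u hu hJ hstay => ?_⟩
  have hno : NearOpt β g f Y x₀ u (β ^ M * D) := by
    intro w hw
    rw [Jinf_rot hβ hB hL xl ul hu, Jinf_rot hβ hB hL xl ul hw]
    linarith [Vinf_le hβ hB hw]
  have hstep : ∀ k, k + 1 ≤ M → Vinf β g f Y (traj f x₀ u (k + 1)) ≤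
      κ * Vinf β g f Y (traj f x₀ u k) + D := by
    intro k hk
    have hx := hstay k (by omega)
    obtain ⟨w, hw, hwJ, -⟩ := hinv _ hx
    have h1 := hno.tail hβ hB' hu k w hw
    rw [hwJ, Jinf_step hβ hB' (hu.tail k)] at h1
    have e : (fun i => u (k + (i + 1))) = fun i => u (k + 1 + i) := by
      funext i; congr 1; ring
    simp only [add_zero, e] at h1
    have h2 : Vinf β g f Y (traj f x₀ u (k + 1)) ≤
      Jinf β g f (f (traj f x₀ u k) (u k)) (fun i => u (k + 1 + i)) :=
      Vinf_le hβ hB' (hu.tail (k + 1))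
    have h3 := hVC' _ hx _ (hu k)
    have h4 : Vinf β g f Y (traj f x₀ u k) / C ≤ g (traj f x₀ u k) (u k) := by
      rw [div_le_iff₀ hC0]; linarith
    have h5 : β ^ M * D / β ^ k ≤ β * D := by
      rw [div_le_iff₀ (pow_pos hβ0 k)]
      have : β ^ M ≤ β ^ (k + 1) := pow_le_pow_of_le_one hβ0.le hβ1.le hk
      calc β ^ M * D ≤ β ^ (k + 1) * D := mul_le_mul_of_nonneg_right this hD.le
        _ = β * D * β ^ k := by ring
    have h6 := mul_le_mul_of_nonneg_left h2 hβ0.le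
    refine le_of_mul_le_mul_left ?_ hβ0
    have e2 : β * (κ * Vinf β g f Y (traj f x₀ u k) + D) =
        Vinf β g f Y (traj f x₀ u k) - Vinf β g f Y (traj f x₀ u k) / C + β * D := by
      rw [hκ_def]; field_simp
    rw [e2]
    linarith
  have hdecay : ∀ k, k ≤ M → Vinf β g f Y (traj f x₀ u k) ≤ κ ^ k * K + k * D := by
    intro k
    induction k with
    | zero => intro _; simpa [traj] using hK x₀ hx₀
    | succ k ih =>
      intro hk
      have h1 := hstep k hk
      have h2 := mul_le_mul_of_nonneg_left (ih (by omega)) hκ0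
      have h3 : κ * (k * D) ≤ k * D := mul_le_of_le_one_left (by positivity) hκ1.le
      push_cast
      rw [pow_succ]
      linarith
  have hsub : {k : ℕ | k ≤ M ∧ ε ≤ ‖traj f x₀ u k - xl‖} ⊆ (Finset.range P : Set ℕ) := by
    rintro k ⟨hkM, hk⟩
    rw [Finset.coe_range, Set.mem_Iio]
    by_contra! hPk
    have h1 : η ≤ αβ ‖traj f x₀ u k - xl‖ :=
      hαβ.mono.monotoneOn (Set.mem_Ici.2 hε.le) (Set.mem_Ici.2 (norm_nonneg _)) hk
    have h2 := hVlow _ (hstay k hkM)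
    have h3 := hdecay k hkM
    have h4 : κ ^ k * K ≤ κ ^ P * K :=
      mul_le_mul_of_nonneg_right (pow_le_pow_of_le_one hκ0 hκ1.le hPk) hK0
    have h5 : (k : ℝ) * D ≤ (M + 1) * D := by
      refine mul_le_mul_of_nonneg_right ?_ hD.le
      have : (k : ℝ) ≤ M := by exact_mod_cast hkM
      linarith
    have h6 : ((M : ℝ) + 1) * D = η / 2 := by
      rw [hD_def]; field_simp
    linarith
  calc _ ≤ (Finset.range P : Set ℕ).ncard := Set.ncard_le_ncard hsub (Finset.finite_toSet _)
    _ = P := by rw [Set.ncard_coe_finset, Finset.card_range]
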